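/- Two finite simple graphs G and G′ are isomorphic if and only if the complements of their 2-subdivisions are isomorphic, i.e., G ≅ G′ iff the complement of Subd₂(G) is isomorphic to the complement of Subd₂(G′). (Consequently the map G ↦ complement of Subd₂(G) is an isomorphism-preserving and isomorphism-reflecting reduction into the class of complements of 2-subdivisions.) -/

import Mathlib

/-!
The internal vertices of the 2-subdivision of `G` correspond to the darts of `G`: an internal
vertex lies next to the first endpoint of its dart, and its other neighbour is the reversed dart.
In this form the subdivision involves no choice of endpoints, so it is plainly functorial.

Conversely, round every vertex of a subdivision to itself if it is an original vertex and to its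
original neighbour if it is internal. The two ends of a path with three edges round to adjacent
vertices, so an isomorphism of subdivisions followed by rounding is a homomorphism `G →g G'`. The
inverse isomorphism rounds to a homomorphism `G' →g G`, and the two are mutually inverse: a
neighbour of an original vertex `w` is internal and rounds to `w`. An isomorphism may well shift
original vertices to internal ones (on cycles and two-way infinite paths); rounding undoes this.
-/

/-- The 2-subdivision of a graph `G`, given a fixed choice `l e`, `r e` of the two
endpoints of each edge `e`: every edge `e` is replaced by the path
`(l e, (e,0), (e,1), r e)` on two new internal vertices. -/
def Subd2 {V : Type} (G : SimpleGraph V) (l r : G.edgeSet → V) :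
    SimpleGraph (V ⊕ (G.edgeSet × Fin 2)) :=
  SimpleGraph.fromRel fun x y =>
    match x, y with
    | Sum.inl u, Sum.inr p => (u = l p.1 ∧ p.2 = 0) ∨ (u = r p.1 ∧ p.2 = 1)
    | Sum.inr p, Sum.inr q => p.1 = q.1 ∧ p.2 ≠ q.2
    | _, _ => False

theorem nonempty_iso_compl_iff {V V' : Type*} {G : SimpleGraph V} {G' : SimpleGraph V'} :
    Nonempty (Gᶜ ≃g G'ᶜ) ↔ Nonempty (G ≃g G') :=
  ⟨fun ⟨φ⟩ => ⟨φ.toEquiv, (SimpleGraph.Embedding.complEquiv.symm φ.toEmbedding).map_adj_iff⟩,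
    fun ⟨φ⟩ => ⟨φ.toEquiv, (SimpleGraph.Embedding.complEquiv φ.toEmbedding).map_adj_iff⟩⟩

/-- The 2-subdivision of `G` with the darts of `G` as internal vertices: the edge `{u, v}` becomes
the path `u, (u, v), (v, u), v`. Unlike `Subd2`, it needs no choice of endpoints. -/
def dartSubdivision {V : Type*} (G : SimpleGraph V) : SimpleGraph (V ⊕ G.Dart) where
  Adj
    | .inl _, .inl _ => False
    | .inl u, .inr d => d.fst = u
    | .inr d, .inl u => d.fst = u
    | .inr d, .inr d' => d.symm = d'
  symm := ⟨by
    rintro (u | d) (v | d') h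
    exacts [h, h, h, h ▸ d.symm_symm]⟩
  loopless := ⟨by
    rintro (u | d) h
    exacts [h, d.symm_ne h]⟩

namespace dartSubdivision

open SimpleGraph

variable {V V' : Type*} {G : SimpleGraph V} {G' : SimpleGraph V'}

@[simp]
theorem not_adj_inl_inl (u v : V) : ¬ (dartSubdivision G).Adj (.inl u) (.inl v) :=
  id

@[simp]
theorem adj_inl_inr (u : V) (d : G.Dart) :
    (dartSubdivision G).Adj (.inl u) (.inr d) ↔ d.fst = u :=
  .rfl

@[simp]
theorem adj_inr_inl (d : G.Dart) (u : V) :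
    (dartSubdivision G).Adj (.inr d) (.inl u) ↔ d.fst = u :=
  .rfl

@[simp]
theorem adj_inr_inr (d d' : G.Dart) :
    (dartSubdivision G).Adj (.inr d) (.inr d') ↔ d.symm = d' :=
  .rfl

theorem adj_inr_iff {x : V ⊕ G.Dart} {d : G.Dart} :
    (dartSubdivision G).Adj x (.inr d) ↔ x = .inl d.fst ∨ x = .inr d.symm := by
  rcases x with u | d'
  · simp [eq_comm]
  · simp [Dart.symm_involutive.eq_iff]

/-- The bijection between darts induced by a graph isomorphism. -/
def mapDartEquiv (φ : G ≃g G') : G.Dart ≃ G'.Dart where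
  toFun := φ.toHom.mapDart
  invFun := φ.symm.toHom.mapDart
  left_inv d := by ext <;> simp
  right_inv d := by ext <;> simp

/-- The isomorphism of subdivisions induced by a graph isomorphism. -/
def mapIso (φ : G ≃g G') : dartSubdivision G ≃g dartSubdivision G' where
  toEquiv := Equiv.sumCongr φ.toEquiv (mapDartEquiv φ)
  map_rel_iff' := by
    have map_symm (d : G.Dart) : (mapDartEquiv φ d).symm = mapDartEquiv φ d.symm := rfl
    have map_fst (d : G.Dart) : (mapDartEquiv φ d).fst = φ d.fst := rfl
    rintro (u | d) (v | d') <;> simp [map_symm, map_fst]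

/-- The original vertex nearest to a vertex of the subdivision. -/
def round : V ⊕ G.Dart → V :=
  Sum.elim id fun d => d.fst

@[simp]
theorem round_inl (u : V) : round (.inl u : V ⊕ G.Dart) = u :=
  rfl

theorem round_eq_of_adj_inl {x : V ⊕ G.Dart} {w : V}
    (h : (dartSubdivision G).Adj x (.inl w)) : round x = w := by
  rcases x with u | d
  · exact (not_adj_inl_inl u w h).elim
  · exact h

theorem inl_round_eq_or_adj (x : V ⊕ G.Dart) :
    .inl (round x) = x ∨ (dartSubdivision G).Adj (.inl (round x)) x := by
  rcases x with u | d
  · exact .inl rfl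
  · exact .inr rfl

theorem adj_round_of_path {a b c d : V ⊕ G.Dart}
    (hab : (dartSubdivision G).Adj a b) (hbc : (dartSubdivision G).Adj b c)
    (hcd : (dartSubdivision G).Adj c d) (hac : a ≠ c) (hbd : b ≠ d) :
    G.Adj (round a) (round d) := by
  rcases b with w | e <;> rcases c with w' | e'
  · exact (not_adj_inl_inl w w' hbc).elim
  · obtain rfl : e'.fst = w := hbc
    have hd : d = .inr e'.symm := (adj_inr_iff.1 hcd.symm).resolve_left hbd.symm
    rw [round_eq_of_adj_inl hab, hd]
    exact e'.adj
  · obtain rfl : e.fst = w' := hbc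
    have ha : a = .inr e.symm := (adj_inr_iff.1 hab).resolve_left hac
    rw [ha, round_eq_of_adj_inl hcd.symm]
    exact e.adj.symm
  · obtain rfl : e.symm = e' := hbc
    have ha : a = .inl e.fst := (adj_inr_iff.1 hab).resolve_right hac
    have hd : d = .inl e.snd :=
      (adj_inr_iff.1 hcd.symm).resolve_right (by simpa using hbd.symm)
    rw [ha, hd]
    exact e.adj

/-- A copy of one subdivision in another, restricted to the original vertices and rounded. -/
def roundHom (φ : Copy (dartSubdivision G) (dartSubdivision G')) : G →g G' where
  toFun u := round (φ (.inl u))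
  map_rel' {u v} h := by
    let d : G.Dart := ⟨(u, v), h⟩
    have hud : (dartSubdivision G).Adj (.inl u) (.inr d) := rfl
    have hdd : (dartSubdivision G).Adj (.inr d) (.inr d.symm) := rfl
    have hdv : (dartSubdivision G).Adj (.inr d.symm) (.inl v) := rfl
    exact adj_round_of_path (φ.toHom.map_adj hud) (φ.toHom.map_adj hdd) (φ.toHom.map_adj hdv)
      (φ.injective.ne Sum.inl_ne_inr) (φ.injective.ne Sum.inr_ne_inl)

theorem roundHom_symm_roundHom (φ : dartSubdivision G ≃g dartSubdivision G') (u : V) :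
    roundHom φ.symm.toCopy (roundHom φ.toCopy u) = u := by
  change round (φ.symm (.inl (round (φ (.inl u))))) = u
  rcases inl_round_eq_or_adj (φ (.inl u)) with heq | hadj
  · rw [heq, φ.symm_apply_apply, round_inl]
  · apply round_eq_of_adj_inl
    simpa only [φ.symm_apply_apply] using φ.symm.map_adj_iff.2 hadj

/-- The isomorphism of graphs obtained by rounding an isomorphism of their subdivisions. -/
def roundIso (φ : dartSubdivision G ≃g dartSubdivision G') : G ≃g G' where
  toFun := roundHom φ.toCopy
  invFun := roundHom φ.symm.toCopy
  left_inv := roundHom_symm_roundHom φ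
  right_inv := roundHom_symm_roundHom φ.symm
  map_rel_iff' {u v} := by
    refine ⟨fun h => ?_, (roundHom φ.toCopy).map_adj⟩
    have hadj := (roundHom φ.symm.toCopy).map_adj h
    change G.Adj (roundHom _ (roundHom φ.toCopy u)) (roundHom _ (roundHom φ.toCopy v)) at hadj
    rwa [roundHom_symm_roundHom, roundHom_symm_roundHom] at hadj

theorem nonempty_iso_iff :
    Nonempty (dartSubdivision G ≃g dartSubdivision G') ↔ Nonempty (G ≃g G') :=
  ⟨Nonempty.map roundIso, Nonempty.map mapIso⟩

end dartSubdivision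

namespace Subd2

open SimpleGraph

section InternalDart

variable {V : Type*} {G : SimpleGraph V} {l r : G.edgeSet → V}

theorem adj_endpoints (hlr : ∀ e : G.edgeSet, (e : Sym2 V) = s(l e, r e)) (e : G.edgeSet) :
    G.Adj (l e) (r e) := by
  rw [← mem_edgeSet, ← hlr]
  exact e.2

variable (hlr : ∀ e : G.edgeSet, (e : Sym2 V) = s(l e, r e))

/-- The dart starting at the original neighbour of the internal vertex `p`, on the same edge. -/
def internalDart (p : G.edgeSet × Fin 2) : G.Dart :=
  let d : G.Dart := ⟨(l p.1, r p.1), adj_endpoints hlr p.1⟩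
  if p.2 = 0 then d else d.symm

theorem internalDart_fst (p : G.edgeSet × Fin 2) :
    (internalDart hlr p).fst = if p.2 = 0 then l p.1 else r p.1 := by
  unfold internalDart
  split_ifs <;> rfl

theorem internalDart_edge (p : G.edgeSet × Fin 2) : (internalDart hlr p).edge = p.1 := by
  unfold internalDart
  split_ifs <;> simp [hlr p.1]

theorem internalDart_symm (p : G.edgeSet × Fin 2) :
    (internalDart hlr p).symm = internalDart hlr (p.1, p.2.rev) := by
  obtain ⟨e, i⟩ := p
  fin_cases i <;> rfl

theorem internalDart_injective : Function.Injective (internalDart hlr) := by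
  rintro ⟨e, i⟩ ⟨f, j⟩ h
  obtain rfl : e = f := Subtype.ext <| by
    simpa only [internalDart_edge] using congrArg Dart.edge h
  by_contra hne
  have hj : j = i.rev := by grind
  rw [hj, ← internalDart_symm hlr (e, i)] at h
  exact Dart.symm_ne _ h.symm

theorem internalDart_surjective : Function.Surjective (internalDart hlr) := by
  intro d
  let e : G.edgeSet := ⟨d.edge, d.edge_mem⟩
  rcases (dart_edge_eq_iff d _).1 (internalDart_edge hlr (e, 0)).symm with h | h
  · exact ⟨(e, 0), h.symm⟩
  · exact ⟨(e, 1), h.symm⟩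

end InternalDart

variable {V : Type} {G : SimpleGraph V} {l r : G.edgeSet → V}

@[simp]
theorem not_adj_inl_inl (u v : V) : ¬ (Subd2 G l r).Adj (.inl u) (.inl v) := by
  simp [Subd2]

theorem adj_inl_inr (u : V) (p : G.edgeSet × Fin 2) :
    (Subd2 G l r).Adj (.inl u) (.inr p) ↔ u = l p.1 ∧ p.2 = 0 ∨ u = r p.1 ∧ p.2 = 1 := by
  simp [Subd2]

theorem adj_inr_inr (p q : G.edgeSet × Fin 2) :
    (Subd2 G l r).Adj (.inr p) (.inr q) ↔ p.1 = q.1 ∧ p.2 ≠ q.2 := by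
  simp only [Subd2, fromRel_adj, ne_eq, Sum.inr.injEq, Prod.ext_iff]
  grind

/-- `Subd2` is, up to isomorphism, independent of the choice of endpoints. -/
noncomputable def isoDartSubdivision (hlr : ∀ e : G.edgeSet, (e : Sym2 V) = s(l e, r e)) :
    Subd2 G l r ≃g dartSubdivision G where
  toEquiv := Equiv.sumCongr (.refl V)
    (.ofBijective _ ⟨internalDart_injective hlr, internalDart_surjective hlr⟩)
  map_rel_iff' := by
    have adj_inl (u : V) (p : G.edgeSet × Fin 2) :
        (internalDart hlr p).fst = u ↔ (Subd2 G l r).Adj (.inl u) (.inr p) := by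
      rw [adj_inl_inr, internalDart_fst]
      grind
    have adj_inr (p q : G.edgeSet × Fin 2) :
        (internalDart hlr p).symm = internalDart hlr q ↔ (Subd2 G l r).Adj (.inr p) (.inr q) := by
      rw [adj_inr_inr, internalDart_symm, (internalDart_injective hlr).eq_iff, Prod.ext_iff]
      grind
    rintro (u | p) (v | q)
    · simp
    · exact adj_inl u q
    · exact (adj_inl v p).trans (adj_comm ..)
    · exact adj_inr p q

end Subd2

theorem iso_iff_complSubd2_iso_general {V V' : Type}
    (G : SimpleGraph V) (G' : SimpleGraph V')
    (l r : G.edgeSet → V)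
    (hlr : ∀ e : G.edgeSet, (e : Sym2 V) = s(l e, r e))
    (l' r' : G'.edgeSet → V')
    (hlr' : ∀ e : G'.edgeSet, (e : Sym2 V') = s(l' e, r' e)) :
    Nonempty (G ≃g G') ↔ Nonempty ((Subd2 G l r)ᶜ ≃g (Subd2 G' l' r')ᶜ) := by
  let σ := Subd2.isoDartSubdivision hlr
  let σ' := Subd2.isoDartSubdivision hlr'
  calc
    Nonempty (G ≃g G') ↔ Nonempty (dartSubdivision G ≃g dartSubdivision G') :=
      dartSubdivision.nonempty_iso_iff.symm
    _ ↔ Nonempty (Subd2 G l r ≃g Subd2 G' l' r') :=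
      (σ.relIsoCongr σ').nonempty_congr.symm
    _ ↔ Nonempty ((Subd2 G l r)ᶜ ≃g (Subd2 G' l' r')ᶜ) := nonempty_iso_compl_iff.symm

/-- Two finite graphs are isomorphic iff the complements of their 2-subdivisions are
isomorphic; hence `G ↦ (Subd₂ G)ᶜ` is an isomorphism-preserving and
isomorphism-reflecting reduction into the class of complements of 2-subdivisions. -/
theorem iso_iff_complSubd2_iso {V V' : Type} [Fintype V] [Fintype V']
    (G : SimpleGraph V) (G' : SimpleGraph V')
    (l r : G.edgeSet → V)
    (hlr : ∀ e : G.edgeSet, (e : Sym2 V) = s(l e, r e))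
    (l' r' : G'.edgeSet → V')
    (hlr' : ∀ e : G'.edgeSet, (e : Sym2 V') = s(l' e, r' e)) :
    Nonempty (G ≃g G') ↔ Nonempty ((Subd2 G l r)ᶜ ≃g (Subd2 G' l' r')ᶜ) :=
  iso_iff_complSubd2_iso_general G G' l r hlr l' r' hlr'
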